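/- For all integers d, k with 1 < k < d and all n, m ≥ 1, the numbers of (d,k)-self-avoiding manifolds satisfy the pseudo-superadditivity c^SAM_{(d,k),n} · c^SAM_{(d,k),m} ≤ c^SAM_{(d,k), n+m+2(k²+3k−1)}. -/

import Mathlib

open Filter

/-- A `k`-face of the hypercubic lattice `ℤ^d`: an orientation set `S ⊆ {1,…,d}`
together with a base vertex `v ∈ ℤ^d`. -/
abbrev Face (d : ℕ) := Finset (Fin d) × (Fin d → ℤ)

/-- The boundary `(k-1)`-edges of a `k`-face `(S, v)`: the `(k-1)`-faces
`(S \ {i}, v)` and `(S \ {i}, v + e_i)` for `i ∈ S`. -/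
def faceEdges {d : ℕ} (f : Face d) : Finset (Face d) :=
  f.1.biUnion fun i =>
    {(f.1.erase i, f.2), (f.1.erase i, f.2 + Pi.single i 1)}

/-- Two faces are adjacent if they are distinct and share a common boundary edge. -/
def FaceAdj {d : ℕ} (f g : Face d) : Prop :=
  f ≠ g ∧ ∃ e, e ∈ faceEdges f ∧ e ∈ faceEdges g

/-- A set of faces is connected with respect to adjacency. -/
def ConnectedFaces {d : ℕ} (M : Finset (Face d)) : Prop :=
  ∀ f ∈ M, ∀ g ∈ M, Relation.ReflTransGen (fun a b => a ∈ M ∧ b ∈ M ∧ FaceAdj a b) f g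

/-- A `(d,k)`-self-avoiding manifold of `k`-area `n`: a connected set of `n` `k`-faces
such that every `(k-1)`-edge bounds at most two of its `k`-faces. -/
def IsSAM (d k n : ℕ) (M : Finset (Face d)) : Prop :=
  M.card = n ∧ (∀ f ∈ M, f.1.card = k) ∧ ConnectedFaces M ∧
    ∀ e : Face d, (M.filter fun f => e ∈ faceEdges f).card ≤ 2

/-- A closed `(d,k)`-self-avoiding manifold: every boundary edge of every face
is shared by exactly two faces. -/
def IsClosedSAM (d k n : ℕ) (M : Finset (Face d)) : Prop :=
  IsSAM d k n M ∧ ∀ f ∈ M, ∀ e ∈ faceEdges f,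
    (M.filter fun g => e ∈ faceEdges g).card = 2

/-- A `(d,k)`-fixed polyominoid of `k`-area `n`: a connected set of `n` `k`-faces. -/
def IsXD (d k n : ℕ) (M : Finset (Face d)) : Prop :=
  M.card = n ∧ (∀ f ∈ M, f.1.card = k) ∧ ConnectedFaces M

/-- Translation of a face by a lattice vector. -/
def translateFace {d : ℕ} (t : Fin d → ℤ) (f : Face d) : Face d := (f.1, f.2 + t)

/-- Two sets of faces are translation-equivalent. -/
def TransEquiv {d : ℕ} (A B : Finset (Face d)) : Prop :=
  ∃ t : Fin d → ℤ, A.image (translateFace t) = B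

/-- The number of `(d,k)`-self-avoiding manifolds of `k`-area `n`, up to translation. -/
noncomputable def samCount (d k n : ℕ) : ℕ :=
  Nat.card (Quot fun A B : {M : Finset (Face d) // IsSAM d k n M} =>
    TransEquiv A.val B.val)

/-- The number of closed `(d,k)`-self-avoiding manifolds of `k`-area `n`, up to
translation. -/
noncomputable def closedSamCount (d k n : ℕ) : ℕ :=
  Nat.card (Quot fun A B : {M : Finset (Face d) // IsClosedSAM d k n M} =>
    TransEquiv A.val B.val)

/-- The number of `(d,k)`-fixed polyominoids of `k`-area `n`, up to translation. -/
noncomputable def xdCount (d k n : ℕ) : ℕ :=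
  Nat.card (Quot fun A B : {M : Finset (Face d) // IsXD d k n M} =>
    TransEquiv A.val B.val)

/-!
Fix a direction `z` and stack `B`, reflected, on top of `A`. First the top of `A` is opened: a
highest face that is parallel to `z` ends in a free edge, and a highest face `f` that is orthogonal
to `z` is replaced by the walls over its edges, each of which ends in a free edge. A strip of faces
grown upwards from this edge can be turned so that it ends in an edge of any orientation orthogonal
to `z`, at the cost of two faces for each direction exchanged, and can then be prolonged to any
length. Opening `B` in the same way, the strip is made to end in the free edge of the reflection of
`B`. Opening costs at most `2k - 1` faces for each of `A` and `B`, and turning the strip at most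
`2k - 1` more.

Both `A` and `B` can be recovered. Cutting the result at a given level yields either `A` or `A`
without `f`; the number of faces below each level shows which of the two happens and where, and `f`
is determined by its walls. The same applies to `B` from the opposite side.
-/

namespace Face

variable {d : ℕ} {z i : Fin d} {c e f g w E : Face d}

theorem mem_faceEdges : e ∈ faceEdges f ↔
    ∃ i ∈ f.1, e.1 = f.1.erase i ∧ (e.2 = f.2 ∨ e.2 = f.2 + Pi.single i 1) := by
  simp only [faceEdges, Finset.mem_biUnion, Finset.mem_insert, Finset.mem_singleton,
    Prod.ext_iff, ← and_or_left]

theorem erase_mem_faceEdges (hi : i ∈ f.1) : (f.1.erase i, f.2) ∈ faceEdges f :=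
  mem_faceEdges.2 ⟨i, hi, rfl, .inl rfl⟩

theorem le_of_mem_faceEdges (h : e ∈ faceEdges f) : f.2 ≤ e.2 := by
  obtain ⟨i, -, -, he | he⟩ := mem_faceEdges.1 h <;> simp [he]

theorem le_add_one_of_mem_faceEdges (h : e ∈ faceEdges f) : e.2 ≤ f.2 + 1 := by
  intro j
  obtain ⟨i, -, -, he | he⟩ := mem_faceEdges.1 h
  · simp [he]
  · by_cases hj : j = i
    · subst hj; simp [he]
    · simp [he, hj]

theorem card_faceEdges (f : Face d) : (faceEdges f).card = 2 * f.1.card := by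
  rw [faceEdges, Finset.card_biUnion, Finset.sum_const_nat (m := 2), mul_comm]
  · exact fun i _ ↦ Finset.card_pair fun h ↦ by simpa using congrFun (Prod.ext_iff.1 h).2 i
  · intro i hi j _ hij
    rw [Function.onFun, Finset.disjoint_left]
    intro e hei hej
    have hei' : e.1 = f.1.erase i := by aesop
    have hej' : e.1 = f.1.erase j := by aesop
    have hmem : i ∈ f.1.erase j := Finset.mem_erase.2 ⟨hij, hi⟩
    simp [← hej', hei'] at hmem

theorem notMem_of_mem_faceEdges (h : e ∈ faceEdges f) (hz : z ∉ f.1) : z ∉ e.1 := by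
  obtain ⟨i, -, he, -⟩ := mem_faceEdges.1 h
  simp [he, hz]

theorem faceAdj_symm (h : FaceAdj f g) : FaceAdj g f :=
  ⟨h.1.symm, h.2.imp fun _ ↦ And.symm⟩

theorem faceAdj_of_mem_faceEdges (hf : f ∈ faceEdges c) (hg : g ∈ faceEdges c)
    (hfg : f.1 ≠ g.1) : FaceAdj f g := by
  obtain ⟨i, hi, hf₁, hf₂⟩ := mem_faceEdges.1 hf
  obtain ⟨j, hj, hg₁, hg₂⟩ := mem_faceEdges.1 hg
  have hij : i ≠ j := by rintro rfl; exact hfg (hf₁.trans hg₁.symm)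
  refine ⟨fun h ↦ hfg (h ▸ rfl), ((c.1.erase i).erase j, f.2 + g.2 - c.2),
    mem_faceEdges.2 ⟨j, ?_, ?_, ?_⟩, mem_faceEdges.2 ⟨i, ?_, ?_, ?_⟩⟩
  · simp [hf₁, hj, hij.symm]
  · simp [hf₁]
  · exact hg₂.imp (by simp +contextual) (by simp +contextual [add_sub_assoc])
  · simp [hg₁, hi, hij]
  · simp [hg₁, Finset.erase_right_comm]
  · exact hf₂.imp (by simp +contextual) (fun h ↦ by simp only [h]; abel)

/-- The product of `e` with the unit interval in a direction `i` that `e` is orthogonal to. -/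
def thicken (i : Fin d) (e : Face d) : Face d := (insert i e.1, e.2)

/-- The translate of `e` by the `i`-th unit vector: the edge of `thicken i e` opposite to `e`. -/
def raise (i : Fin d) (e : Face d) : Face d := translateFace (Pi.single i 1) e

theorem card_thicken (hi : i ∉ e.1) : (thicken i e).1.card = e.1.card + 1 :=
  Finset.card_insert_of_notMem hi

theorem thicken_injOn : Set.InjOn (thicken z) {e | z ∉ e.1} := by
  intro a ha b hb h
  refine Prod.ext ?_ (Prod.ext_iff.1 h).2
  rw [← Finset.erase_insert ha, ← Finset.erase_insert hb]
  exact congrArg (Finset.erase · z) (Prod.ext_iff.1 h).1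

theorem mem_faceEdges_thicken (hi : i ∉ e.1) : e ∈ faceEdges (thicken i e) :=
  mem_faceEdges.2 ⟨i, Finset.mem_insert_self _ _, (Finset.erase_insert hi).symm, .inl rfl⟩

theorem raise_mem_faceEdges_thicken (hi : i ∉ e.1) : raise i e ∈ faceEdges (thicken i e) :=
  mem_faceEdges.2 ⟨i, Finset.mem_insert_self _ _, (Finset.erase_insert hi).symm, .inr rfl⟩

theorem thicken_mem_faceEdges_thicken (hz : z ∉ f.1) (he : e ∈ faceEdges f) :
    thicken z e ∈ faceEdges (thicken z f) := by
  obtain ⟨i, hi, he₁, he₂⟩ := mem_faceEdges.1 he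
  refine mem_faceEdges.2 ⟨i, Finset.mem_insert_of_mem hi, ?_, he₂⟩
  simp only [thicken, he₁]
  exact (Finset.erase_insert_of_ne (ne_of_mem_of_not_mem hi hz).symm).symm

/-- Twice the `z`-coordinate of the center of `f`, so that faces parallel to the direction `z`
have odd level and the others even level. -/
def level (z : Fin d) (f : Face d) : ℤ := 2 * f.2 z + if z ∈ f.1 then 1 else 0

theorem level_of_notMem (h : z ∉ f.1) : level z f = 2 * f.2 z := by simp [level, h]

theorem level_of_mem (h : z ∈ f.1) : level z f = 2 * f.2 z + 1 := by simp [level, h]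

theorem level_translateFace (z : Fin d) (t : Fin d → ℤ) (f : Face d) :
    level z (translateFace t f) = level z f + 2 * t z := by
  by_cases h : z ∈ f.1 <;>
    simp only [level, translateFace, Pi.add_apply, h, ↓reduceIte] <;> ring

theorem level_raise (z : Fin d) (e : Face d) : level z (raise z e) = level z e + 2 := by
  simp [raise, level_translateFace]

theorem level_thicken_self (hz : z ∉ e.1) : level z (thicken z e) = level z e + 1 := by
  simp [level, thicken, hz]

theorem level_edge_cases (h : e ∈ faceEdges f) :
    (level z e = level z f ∧ (z ∈ e.1 ↔ z ∈ f.1)) ∨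
    (level z e + 1 = level z f ∧ z ∉ e.1 ∧ f = thicken z e) ∨
    (level z e = level z f + 1 ∧ z ∉ e.1 ∧ ∃ e', e = raise z e' ∧ f = thicken z e') := by
  obtain ⟨i, hi, he₁, he₂⟩ := mem_faceEdges.1 h
  by_cases hzi : z = i
  · subst hzi
    right
    have hze : z ∉ e.1 := by simp [he₁]
    have hf : f.1 = insert z e.1 := by rw [he₁, Finset.insert_erase hi]
    rcases he₂ with he₂ | he₂
    · have hfe : f = thicken z e := Prod.ext hf he₂.symm
      exact .inl ⟨by rw [hfe, level_thicken_self hze], hze, hfe⟩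
    · have hfe : f = thicken z (e.1, f.2) := Prod.ext hf rfl
      have her : e = raise z (e.1, f.2) := Prod.ext rfl he₂
      refine .inr ⟨?_, hze, _, her, hfe⟩
      rw [level_of_mem hi, level_of_notMem hze, he₂]
      simp
      ring
  · left
    have hmem : z ∈ e.1 ↔ z ∈ f.1 := by simp [he₁, hzi]
    have hcoord : e.2 z = f.2 z := by rcases he₂ with he₂ | he₂ <;> simp [he₂, hzi]
    exact ⟨by simp only [level, hmem, hcoord], hmem⟩

theorem level_edge_of_notMem (h : e ∈ faceEdges f) (hz : z ∉ f.1) : level z e = level z f := by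
  rcases level_edge_cases (z := z) h with ⟨hl, -⟩ | ⟨-, -, rfl⟩ | ⟨-, -, e', -, rfl⟩
  · exact hl
  all_goals simp [thicken] at hz

-- A face of odd level below the even level of `E` lies below it by at least one.
theorem level_edge_le (h : e ∈ faceEdges f) (hE : z ∉ E.1) (hl : level z f ≤ level z E) :
    level z e ≤ level z E := by
  have hEven := level_of_notMem hE
  rcases level_edge_cases (z := z) h with ⟨he, -⟩ | ⟨he, -⟩ | ⟨he, hze, -⟩
  · omega
  · omega
  · have := level_of_notMem hze
    omega

theorem le_level_edge (h : e ∈ faceEdges f) (hE : z ∉ E.1) (hl : level z E ≤ level z f) :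
    level z E ≤ level z e := by
  have hEven := level_of_notMem hE
  rcases level_edge_cases (z := z) h with ⟨he, -⟩ | ⟨he, hze, -⟩ | ⟨he, -⟩
  · omega
  · have := level_of_notMem hze
    omega
  · omega

theorem eq_of_common_edge_above (hf : E ∈ faceEdges f) (hg : E ∈ faceEdges g)
    (hlf : level z f < level z E) (hlg : level z g < level z E) : f = g := by
  rcases level_edge_cases (z := z) hf with ⟨h, -⟩ | ⟨h, -⟩ | ⟨-, -, a, hEa, rfl⟩
  · omega
  · omega
  rcases level_edge_cases (z := z) hg with ⟨h, -⟩ | ⟨h, -⟩ | ⟨-, -, b, hEb, rfl⟩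
  · omega
  · omega
  have hab : a = b := by
    have := hEa.symm.trans hEb
    simpa [raise, translateFace, Prod.ext_iff] using this
  rw [hab]

/-- The faces `e × [0, 1]` in direction `z` erected on the edges `e` of `f`. -/
def walls (z : Fin d) (f : Face d) : Finset (Face d) := (faceEdges f).image (thicken z)

theorem walls_subset_faceEdges_thicken (hz : z ∉ f.1) : walls z f ⊆ faceEdges (thicken z f) :=
  Finset.image_subset_iff.2 fun _ he ↦ thicken_mem_faceEdges_thicken hz he

theorem card_walls (hz : z ∉ f.1) : (walls z f).card = 2 * f.1.card := by
  rw [walls, Finset.card_image_of_injOn, card_faceEdges]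
  exact thicken_injOn.mono fun e he ↦ notMem_of_mem_faceEdges he hz

theorem level_of_mem_walls (hz : z ∉ f.1) (hw : w ∈ walls z f) : level z w = level z f + 1 := by
  obtain ⟨e, he, rfl⟩ := Finset.mem_image.1 hw
  rw [level_thicken_self (notMem_of_mem_faceEdges he hz), level_edge_of_notMem he hz]

theorem card_of_mem_walls (hz : z ∉ f.1) (hw : w ∈ walls z f) : w.1.card = f.1.card := by
  obtain ⟨e, he, rfl⟩ := Finset.mem_image.1 hw
  obtain ⟨i, hi, he₁, -⟩ := mem_faceEdges.1 he
  rw [card_thicken (notMem_of_mem_faceEdges he hz), he₁, Finset.card_erase_add_one hi]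

theorem edge_of_wall_cases (hz : z ∉ f.1) (hw : w ∈ walls z f) (he : e ∈ faceEdges w) :
    level z f < level z e ∨ e ∈ faceEdges f ∧ w = thicken z e := by
  have hlw := level_of_mem_walls hz hw
  rcases level_edge_cases (z := z) he with ⟨hl, -⟩ | ⟨-, hze, hwe⟩ | ⟨hl, -⟩
  · left; omega
  · obtain ⟨e', he', rfl⟩ := Finset.mem_image.1 hw
    have : e' = e := thicken_injOn (notMem_of_mem_faceEdges he' hz) hze hwe
    exact .inr ⟨this ▸ he', hwe⟩
  · left; omega

theorem le_of_walls_subset (hf : z ∉ f.1) (hcard : 2 ≤ f.1.card)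
    (h : walls z f ⊆ walls z g) : f.1 ⊆ g.1 ∧ g.2 ≤ f.2 := by
  have hwall : ∀ i ∈ f.1, insert z (f.1.erase i) ⊆ insert z g.1 ∧ g.2 ≤ f.2 := by
    intro i hi
    obtain ⟨e, he, hew⟩ := Finset.mem_image.1 (h (Finset.mem_image_of_mem _
      (erase_mem_faceEdges hi)))
    obtain ⟨j, -, he₁, -⟩ := mem_faceEdges.1 he
    rw [thicken, thicken, Prod.mk.injEq] at hew
    rw [← hew.1, he₁, ← hew.2]
    exact ⟨Finset.insert_subset_insert _ (Finset.erase_subset _ _), le_of_mem_faceEdges he⟩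
  refine ⟨fun x hx ↦ ?_, ?_⟩
  · obtain ⟨i, hi, hix⟩ := Finset.exists_mem_ne hcard x
    have hxz : x ≠ z := fun hxz ↦ hf (hxz ▸ hx)
    have hmem := (hwall i hi).1 (Finset.mem_insert_of_mem (Finset.mem_erase.2 ⟨hix.symm, hx⟩))
    exact Finset.mem_of_mem_insert_of_ne hmem hxz
  · obtain ⟨i, hi⟩ := Finset.card_pos.1 (zero_lt_two.trans_le hcard)
    exact (hwall i hi).2

theorem walls_injOn : Set.InjOn (walls z) {f : Face d | z ∉ f.1 ∧ 2 ≤ f.1.card} := by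
  rintro f ⟨hf, hfc⟩ g ⟨hg, hgc⟩ h
  have hfg := le_of_walls_subset hf hfc h.le
  have hgf := le_of_walls_subset hg hgc h.ge
  exact Prod.ext (hfg.1.antisymm hgf.1) (hgf.2.antisymm hfg.2)

/-- The reflection of the lattice in the hyperplane `x_z = 0`. A face that extends in direction `z`
occupies `[v_z, v_z + 1]`, which is mapped to `[-v_z - 1, -v_z]`. -/
def reflect (z : Fin d) (f : Face d) : Face d :=
  (f.1, Function.update f.2 z (-f.2 z - if z ∈ f.1 then 1 else 0))

theorem reflect_reflect (z : Fin d) (f : Face d) : reflect z (reflect z f) = f := by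
  refine Prod.ext rfl ?_
  by_cases h : z ∈ f.1 <;> simp [reflect, h]

theorem image_reflect_reflect (z : Fin d) (M : Finset (Face d)) :
    (M.image (reflect z)).image (reflect z) = M := by
  rw [Finset.image_image, Function.Involutive.comp_self (reflect_reflect z), Finset.image_id]

theorem level_reflect (z : Fin d) (f : Face d) : level z (reflect z f) = -level z f := by
  by_cases h : z ∈ f.1
  · simp only [level, reflect, h, ↓reduceIte, Function.update_self]
    ring
  · simp [level, reflect, h]

theorem reflect_translateFace (z : Fin d) (t : Fin d → ℤ) (f : Face d) :
    reflect z (translateFace t f) =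
      translateFace (Function.update t z (-t z)) (reflect z f) := by
  refine Prod.ext rfl (funext fun x ↦ ?_)
  by_cases hx : x = z
  · subst hx
    by_cases h : x ∈ f.1 <;>
      simp only [reflect, translateFace, Pi.add_apply, h, ↓reduceIte, Function.update_self] <;> ring
  · simp [reflect, translateFace, hx]

theorem reflect_mem_faceEdges (z : Fin d) (h : e ∈ faceEdges f) :
    reflect z e ∈ faceEdges (reflect z f) := by
  obtain ⟨i, hi, he₁, he₂⟩ := mem_faceEdges.1 h
  refine mem_faceEdges.2 ⟨i, hi, he₁, ?_⟩
  by_cases hz : z = i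
  · subst hz
    refine he₂.symm.imp (fun he₂' ↦ funext fun x ↦ ?_) (fun he₂' ↦ funext fun x ↦ ?_) <;>
      by_cases hx : x = z
    · subst hx
      simp only [reflect, he₁, he₂', Pi.add_apply, Pi.single_eq_same, Finset.notMem_erase, hi,
        ↓reduceIte, Function.update_self]
      ring
    · simp [reflect, he₂', hx]
    · subst hx; simp [reflect, he₁, he₂', hi]
    · simp [reflect, he₂', hx]
  · have hmem : z ∈ e.1 ↔ z ∈ f.1 := by simp [he₁, hz]
    refine he₂.imp (fun he₂ ↦ by simp only [reflect, hmem, he₂]) fun he₂ ↦ funext fun x ↦ ?_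
    by_cases hx : x = z
    · subst hx; simp [reflect, hmem, he₂, hz]
    · simp [reflect, he₂, hx]

theorem translateFace_neg_translateFace (t : Fin d → ℤ) (f : Face d) :
    translateFace (-t) (translateFace t f) = f := by
  simp [translateFace]

theorem image_translateFace_image_translateFace (s t : Fin d → ℤ) (M : Finset (Face d)) :
    (M.image (translateFace s)).image (translateFace t) = M.image (translateFace (s + t)) := by
  rw [Finset.image_image]
  congr 1
  funext f
  simp [translateFace, add_assoc]

theorem image_translateFace_zero (M : Finset (Face d)) :
    M.image (translateFace (0 : Fin d → ℤ)) = M := by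
  have : translateFace (0 : Fin d → ℤ) = id := by funext f; simp [translateFace]
  rw [this, Finset.image_id]

theorem transEquiv_equivalence : Equivalence (TransEquiv (d := d)) where
  refl A := ⟨0, image_translateFace_zero A⟩
  symm := by
    rintro A _ ⟨t, rfl⟩
    exact ⟨-t, by rw [image_translateFace_image_translateFace, add_neg_cancel,
      image_translateFace_zero]⟩
  trans := by
    rintro A _ _ ⟨s, rfl⟩ ⟨t, rfl⟩
    exact ⟨s + t, (image_translateFace_image_translateFace s t A).symm⟩

theorem transEquiv_image_reflect {A B : Finset (Face d)} (z : Fin d) (h : TransEquiv A B) :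
    TransEquiv (A.image (reflect z)) (B.image (reflect z)) := by
  obtain ⟨t, rfl⟩ := h
  refine ⟨Function.update t z (-t z), ?_⟩
  rw [Finset.image_image, Finset.image_image]
  exact Finset.image_congr fun f _ ↦ (reflect_translateFace z t f).symm

/-- An injective map of faces that commutes with taking boundary edges, such as the one induced by
a symmetry of the lattice. -/
structure IsSymmetry (φ : Face d → Face d) : Prop where
  injective : Function.Injective φ
  faceEdges_map : ∀ f, faceEdges (φ f) = (faceEdges f).image φ

theorem isSymmetry_translateFace (t : Fin d → ℤ) : IsSymmetry (translateFace t) where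
  injective := Function.LeftInverse.injective (translateFace_neg_translateFace t)
  faceEdges_map f := by
    simp [faceEdges, Finset.biUnion_image, translateFace, Finset.image_insert, add_right_comm]

theorem isSymmetry_reflect (z : Fin d) : IsSymmetry (reflect z) where
  injective := Function.LeftInverse.injective (reflect_reflect z)
  faceEdges_map f := by
    refine Finset.Subset.antisymm (fun e he ↦ ?_)
      (Finset.image_subset_iff.2 fun _ ↦ reflect_mem_faceEdges z)
    refine Finset.mem_image.2 ⟨reflect z e, ?_, reflect_reflect z e⟩
    simpa only [reflect_reflect] using reflect_mem_faceEdges z he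

theorem walls_translateFace (z : Fin d) (t : Fin d → ℤ) (f : Face d) :
    walls z (translateFace t f) = (walls z f).image (translateFace t) := by
  rw [walls, walls, (isSymmetry_translateFace t).faceEdges_map, Finset.image_image,
    Finset.image_image]
  rfl

namespace IsSymmetry

variable {φ : Face d → Face d}

theorem mem_faceEdges_iff (h : IsSymmetry φ) : φ e ∈ faceEdges (φ f) ↔ e ∈ faceEdges f := by
  rw [h.faceEdges_map, h.injective.mem_finset_image]

theorem card_map (h : IsSymmetry φ) (f : Face d) : (φ f).1.card = f.1.card := by
  have hcard := congrArg Finset.card (h.faceEdges_map f)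
  rw [Finset.card_image_of_injective _ h.injective, card_faceEdges, card_faceEdges] at hcard
  omega

theorem faceAdj_map (h : IsSymmetry φ) (hfg : FaceAdj f g) : FaceAdj (φ f) (φ g) := by
  obtain ⟨hne, e, hf, hg⟩ := hfg
  exact ⟨h.injective.ne hne, φ e, h.mem_faceEdges_iff.2 hf, h.mem_faceEdges_iff.2 hg⟩

end IsSymmetry

end Face

open Face

section SelfAvoiding

variable {d k : ℕ} {z : Fin d} {c e f g E : Face d} {M N A W X Y : Finset (Face d)}
  {φ : Face d → Face d}

/-- Adjacency of faces within `M`, the relation whose chains `ConnectedFaces M` refers to. -/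
abbrev AdjIn (M : Finset (Face d)) (f g : Face d) : Prop := f ∈ M ∧ g ∈ M ∧ FaceAdj f g

theorem AdjIn.mono (hMN : M ⊆ N) : AdjIn M ≤ AdjIn N :=
  fun _ _ h ↦ ⟨hMN h.1, hMN h.2.1, h.2.2⟩

instance AdjIn.symm : Std.Symm (AdjIn M) where
  symm _ _ h := ⟨h.2.1, h.1, faceAdj_symm h.2.2⟩

theorem connectedFaces_of_forall_reach
    (h : ∀ f ∈ M, Relation.ReflTransGen (AdjIn M) f c) : ConnectedFaces M :=
  fun f hf g hg ↦ (h f hf).trans (Relation.ReflTransGen.stdSymm.symm _ _ (h g hg))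

theorem ConnectedFaces.union (hX : ConnectedFaces X) (hY : ConnectedFaces Y) (hf : f ∈ X)
    (hg : g ∈ Y) (hfg : FaceAdj f g) : ConnectedFaces (X ∪ Y) := by
  refine connectedFaces_of_forall_reach (c := f) fun a ha ↦ ?_
  rcases Finset.mem_union.1 ha with ha | ha
  · exact Relation.ReflTransGen.mono (AdjIn.mono Finset.subset_union_left) _ _ (hX a ha f hf)
  · refine (Relation.ReflTransGen.mono (AdjIn.mono Finset.subset_union_right) _ _
      (hY a ha g hg)).tail ?_
    exact ⟨Finset.mem_union_right _ hg, Finset.mem_union_left _ hf, faceAdj_symm hfg⟩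

theorem ConnectedFaces.image (hM : ConnectedFaces M) (hφ : IsSymmetry φ) :
    ConnectedFaces (M.image φ) := by
  intro a ha b hb
  obtain ⟨f, hf, rfl⟩ := Finset.mem_image.1 ha
  obtain ⟨g, hg, rfl⟩ := Finset.mem_image.1 hb
  exact Relation.ReflTransGen.lift φ (fun _ _ h ↦ ⟨Finset.mem_image_of_mem _ h.1,
    Finset.mem_image_of_mem _ h.2.1, hφ.faceAdj_map h.2.2⟩) _ _ (hM f hf g hg)

theorem ConnectedFaces.replace (hA : ConnectedFaces A) (hf : f ∈ A) (hW : ConnectedFaces W)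
    (hne : W.Nonempty) (hadj : ∀ g ∈ A, FaceAdj g f → ∃ w ∈ W, FaceAdj g w) :
    ConnectedFaces (A.erase f ∪ W) := by
  obtain ⟨c, hc⟩ := hne
  have hW' : ∀ w ∈ W, Relation.ReflTransGen (AdjIn (A.erase f ∪ W)) w c := fun w hw ↦
    Relation.ReflTransGen.mono (AdjIn.mono Finset.subset_union_right) _ _ (hW w hw c hc)
  have hA' : ∀ g, Relation.ReflTransGen (AdjIn A) g f → g ≠ f →
      Relation.ReflTransGen (AdjIn (A.erase f ∪ W)) g c := by
    intro g hg
    induction hg using Relation.ReflTransGen.head_induction_on with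
    | refl => exact fun h ↦ absurd rfl h
    | @head a b hab _ ih =>
      intro haf
      have ha : a ∈ A.erase f ∪ W := Finset.mem_union_left _ (Finset.mem_erase.2 ⟨haf, hab.1⟩)
      by_cases hbf : b = f
      · obtain ⟨w, hw, haw⟩ := hadj a hab.1 (hbf ▸ hab.2.2)
        exact (hW' w hw).head ⟨ha, Finset.mem_union_right _ hw, haw⟩
      · have hb : b ∈ A.erase f ∪ W :=
          Finset.mem_union_left _ (Finset.mem_erase.2 ⟨hbf, hab.2.1⟩)
        exact (ih hbf).head ⟨ha, hb, hab.2.2⟩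
  refine connectedFaces_of_forall_reach (c := c) fun g hg ↦ ?_
  rcases Finset.mem_union.1 hg with hg | hg
  · obtain ⟨hgf, hgA⟩ := Finset.mem_erase.1 hg
    exact hA' g (hA g hgA f hf) hgf
  · exact hW' g hg

/-- The faces of `M` that have `e` as a boundary edge. -/
def incident (M : Finset (Face d)) (e : Face d) : Finset (Face d) := {f ∈ M | e ∈ faceEdges f}

theorem mem_incident : f ∈ incident M e ↔ f ∈ M ∧ e ∈ faceEdges f := Finset.mem_filter

theorem incident_union : incident (X ∪ Y) e = incident X e ∪ incident Y e := Finset.filter_union ..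

theorem incident_eq_empty : incident M e = ∅ ↔ ∀ f ∈ M, e ∉ faceEdges f :=
  Finset.filter_eq_empty_iff

theorem card_incident_image (hφ : IsSymmetry φ) :
    (incident (M.image φ) (φ e)).card = (incident M e).card := by
  rw [incident, Finset.filter_image, Finset.card_image_of_injective _ hφ.injective]
  simp only [hφ.mem_faceEdges_iff, incident]

theorem card_incident_eq_one_of_level_lt (hlt : ∀ f ∈ M, level z f < level z E) (hf : f ∈ M)
    (hE : E ∈ faceEdges f) : (incident M E).card = 1 := by
  refine Finset.card_eq_one.2 ⟨f, Finset.eq_singleton_iff_unique_mem.2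
    ⟨mem_incident.2 ⟨hf, hE⟩, fun g hg ↦ ?_⟩⟩
  obtain ⟨hg, hEg⟩ := mem_incident.1 hg
  exact eq_of_common_edge_above hEg hE (hlt g hg) (hlt f hf)

theorem sdiff_erase_erase_subset {i j : Fin d} (S : Finset (Fin d)) :
    S \ ((S.erase i).erase j) ⊆ {i, j} := by
  intro x hx
  simp only [Finset.mem_sdiff, Finset.mem_erase, Finset.mem_insert, Finset.mem_singleton] at hx ⊢
  tauto

theorem card_incident_faceEdges_le_two (c e : Face d) : (incident (faceEdges c) e).card ≤ 2 := by
  obtain hempty | ⟨w, hw⟩ := (incident (faceEdges c) e).eq_empty_or_nonempty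
  · simp [hempty]
  have hsub : incident (faceEdges c) e ⊆
      (c.1 \ e.1).image fun i ↦ (c.1.erase i, Function.update c.2 i (e.2 i)) := by
    intro w hw
    obtain ⟨hwc, hew⟩ := mem_incident.1 hw
    obtain ⟨i, hi, hw₁, hw₂⟩ := mem_faceEdges.1 hwc
    obtain ⟨j, hj, he₁, he₂⟩ := mem_faceEdges.1 hew
    have hij : i ≠ j := by rintro rfl; simp [hw₁] at hj
    have hei : e.2 i = w.2 i := by rcases he₂ with he₂ | he₂ <;> simp [he₂, hij]
    refine Finset.mem_image.2 ⟨i, by simp [hi, he₁, hw₁], Prod.ext hw₁.symm (funext fun x ↦ ?_)⟩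
    by_cases hx : x = i
    · subst hx; simp [hei]
    · rcases hw₂ with hw₂ | hw₂ <;> simp [hw₂, hx]
  have hpair : ∃ i j, c.1 \ e.1 ⊆ {i, j} := by
    obtain ⟨hwc, hew⟩ := mem_incident.1 hw
    obtain ⟨i, -, hw₁, -⟩ := mem_faceEdges.1 hwc
    obtain ⟨j, -, he₁, -⟩ := mem_faceEdges.1 hew
    exact ⟨i, j, by rw [he₁, hw₁]; exact sdiff_erase_erase_subset _⟩
  obtain ⟨i, j, hij⟩ := hpair
  calc (incident (faceEdges c) e).card
      ≤ (c.1 \ e.1).card := (Finset.card_le_card hsub).trans Finset.card_image_le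
    _ ≤ ({i, j} : Finset (Fin d)).card := Finset.card_le_card hij
    _ ≤ 2 := Finset.card_le_two

/-- The condition on `M` in `IsSAM`, without prescribing the area. -/
structure IsSelfAvoiding (k : ℕ) (M : Finset (Face d)) : Prop where
  card_eq : ∀ f ∈ M, f.1.card = k
  connected : ConnectedFaces M
  card_incident_le : ∀ e, (incident M e).card ≤ 2

theorem isSAM_iff {n : ℕ} : IsSAM d k n M ↔ M.card = n ∧ IsSelfAvoiding k M :=
  and_congr_right fun _ ↦ ⟨fun h ↦ ⟨h.1, h.2.1, h.2.2⟩, fun h ↦ ⟨h.1, h.2, h.3⟩⟩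

theorem isSelfAvoiding_singleton (f : Face d) : IsSelfAvoiding f.1.card {f} where
  card_eq := by simp
  connected := connectedFaces_of_forall_reach (c := f) fun g hg ↦ by
    rw [Finset.mem_singleton.1 hg]
  card_incident_le _ := (Finset.card_filter_le _ _).trans (by simp)

theorem IsSelfAvoiding.image (hM : IsSelfAvoiding k M) (hφ : IsSymmetry φ) :
    IsSelfAvoiding k (M.image φ) where
  card_eq := Finset.forall_mem_image.2 fun f hf ↦ (hφ.card_map f).trans (hM.card_eq f hf)
  connected := hM.connected.image hφ
  card_incident_le e := by
    obtain hempty | ⟨f, hf⟩ := (incident (M.image φ) e).eq_empty_or_nonempty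
    · simp [hempty]
    obtain ⟨hf, he⟩ := mem_incident.1 hf
    obtain ⟨g, -, rfl⟩ := Finset.mem_image.1 hf
    rw [hφ.faceEdges_map] at he
    obtain ⟨e, -, rfl⟩ := Finset.mem_image.1 he
    exact (card_incident_image hφ).trans_le (hM.card_incident_le e)

theorem IsSelfAvoiding.union (hX : IsSelfAvoiding k X) (hY : IsSelfAvoiding k Y)
    (hXY : Disjoint X Y) (hXE : (incident X E).card = 1) (hYE : (incident Y E).card = 1)
    (hE : ∀ f ∈ X, ∀ g ∈ Y, ∀ e ∈ faceEdges f, e ∈ faceEdges g → e = E) :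
    IsSelfAvoiding k (X ∪ Y) where
  card_eq f hf := (Finset.mem_union.1 hf).elim (hX.card_eq f) (hY.card_eq f)
  connected := by
    obtain ⟨f, hf⟩ := Finset.card_pos.1 (hXE ▸ one_pos)
    obtain ⟨g, hg⟩ := Finset.card_pos.1 (hYE ▸ one_pos)
    obtain ⟨hf, hEf⟩ := mem_incident.1 hf
    obtain ⟨hg, hEg⟩ := mem_incident.1 hg
    exact hX.connected.union hY.connected hf hg
      ⟨fun hfg ↦ Finset.disjoint_left.1 hXY hf (hfg ▸ hg), E, hEf, hEg⟩
  card_incident_le e := by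
    rw [incident_union]
    by_cases heE : e = E
    · subst heE
      exact (Finset.card_union_le _ _).trans (by omega)
    obtain hempty | ⟨f, hf⟩ := (incident X e).eq_empty_or_nonempty
    · rw [hempty, Finset.empty_union]
      exact hY.card_incident_le e
    obtain ⟨hf, hef⟩ := mem_incident.1 hf
    rw [incident_eq_empty.2 fun g hg heg ↦ heE (hE f hf g hg e hef heg), Finset.union_empty]
    exact hX.card_incident_le e

theorem IsSelfAvoiding.insert (hX : IsSelfAvoiding k X) (hg : g.1.card = k) (hgX : g ∉ X)
    (hXE : (incident X E).card = 1) (hEg : E ∈ faceEdges g)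
    (hE : ∀ f ∈ X, ∀ e ∈ faceEdges f, e ∈ faceEdges g → e = E) :
    IsSelfAvoiding k (insert g X) := by
  rw [Finset.insert_eq, Finset.union_comm]
  refine hX.union (hg ▸ isSelfAvoiding_singleton g) (Finset.disjoint_singleton_right.2 hgX) hXE
    ?_ fun f hf g' hg' e hef heg ↦ hE f hf e hef (Finset.mem_singleton.1 hg' ▸ heg)
  rw [incident, Finset.filter_singleton, if_pos hEg, Finset.card_singleton]

theorem connectedFaces_walls (hz : z ∉ f.1) (hcard : 2 ≤ f.1.card) :
    ConnectedFaces (walls z f) := by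
  have hadj : ∀ v ∈ walls z f, ∀ w ∈ walls z f, v.1 ≠ w.1 → AdjIn (walls z f) v w :=
    fun v hv w hw hvw ↦ ⟨hv, hw, faceAdj_of_mem_faceEdges
      (walls_subset_faceEdges_thicken hz hv) (walls_subset_faceEdges_thicken hz hw) hvw⟩
  have herase : ∀ i ∈ f.1, thicken z (f.1.erase i, f.2) ∈ walls z f :=
    fun i hi ↦ Finset.mem_image_of_mem _ (erase_mem_faceEdges hi)
  intro v hv w hw
  by_cases hvw : v.1 = w.1
  · obtain ⟨e, he, hev⟩ := Finset.mem_image.1 hv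
    obtain ⟨i, hi, he₁, -⟩ := mem_faceEdges.1 he
    obtain ⟨j, hj, hji⟩ := Finset.exists_mem_ne hcard i
    have hiv : i ∉ v.1 := by
      simp [← hev, thicken, he₁, ne_of_mem_of_not_mem hi hz]
    have hne : v.1 ≠ (thicken z (f.1.erase j, f.2)).1 := by
      intro h
      rw [h] at hiv
      simp [thicken, hi, hji.symm] at hiv
    exact .head (hadj v hv _ (herase j hj) hne)
      (.single (hadj _ (herase j hj) w hw (hvw ▸ hne.symm)))
  · exact .single (hadj v hv w hw hvw)

theorem IsSelfAvoiding.connectedFaces_replace_walls (hA : IsSelfAvoiding k A) (hk : 2 ≤ k)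
    (hf : f ∈ A) (hz : z ∉ f.1) (hmax : ∀ g ∈ A, level z g ≤ level z f) :
    ConnectedFaces (A.erase f ∪ walls z f) := by
  have hcard : 2 ≤ f.1.card := hA.card_eq f hf ▸ hk
  have hne : (walls z f).Nonempty := by
    rw [← Finset.card_pos, card_walls hz]
    omega
  refine hA.connected.replace hf (connectedFaces_walls hz hcard) hne fun g hg hgf ↦ ?_
  obtain ⟨-, e, heg, hef⟩ := hgf
  have hw : thicken z e ∈ walls z f := Finset.mem_image_of_mem _ hef
  refine ⟨thicken z e, hw, ?_, e, heg, mem_faceEdges_thicken (notMem_of_mem_faceEdges hef hz)⟩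
  rintro rfl
  have hlw := level_of_mem_walls hz hw
  have hlg := hmax _ hg
  omega

theorem IsSelfAvoiding.card_incident_replace_walls_le (hA : IsSelfAvoiding k A) (hf : f ∈ A)
    (hz : z ∉ f.1) (hmax : ∀ g ∈ A, level z g ≤ level z f) (e : Face d) :
    (incident (A.erase f ∪ walls z f) e).card ≤ 2 := by
  have hwalls : (incident (walls z f) e).card ≤ 2 :=
    (Finset.card_le_card (Finset.filter_subset_filter _ (walls_subset_faceEdges_thicken hz))).trans
      (card_incident_faceEdges_le_two _ e)
  have herase : incident (A.erase f) e = (incident A e).erase f := Finset.filter_erase ..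
  have hAe := hA.card_incident_le e
  rw [incident_union]
  rcases lt_or_ge (level z f) (level z e) with hlt | hle
  · have hempty : incident (A.erase f) e = ∅ := incident_eq_empty.2 fun g hg heg ↦
      hlt.not_ge (level_edge_le heg hz (hmax g (Finset.mem_of_mem_erase hg)))
    rwa [hempty, Finset.empty_union]
  have hcases : ∀ w ∈ incident (walls z f) e, e ∈ faceEdges f ∧ w = thicken z e := by
    intro w hw
    obtain ⟨hw, hew⟩ := mem_incident.1 hw
    exact (edge_of_wall_cases hz hw hew).resolve_left hle.not_gt
  by_cases hef : e ∈ faceEdges f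
  · have hA₁ : (incident (A.erase f) e).card ≤ 1 := by
      rw [herase, Finset.card_erase_of_mem (mem_incident.2 ⟨hf, hef⟩)]
      omega
    have hW₁ : (incident (walls z f) e).card ≤ 1 :=
      Finset.card_le_one.2 fun v hv w hw ↦ (hcases v hv).2.trans (hcases w hw).2.symm
    exact (Finset.card_union_le _ _).trans (by omega)
  · rw [Finset.eq_empty_of_forall_notMem fun w hw ↦ hef (hcases w hw).1, Finset.union_empty, herase]
    exact (Finset.card_le_card (Finset.erase_subset _ _)).trans hAe

theorem IsSelfAvoiding.replace_walls (hA : IsSelfAvoiding k A) (hk : 2 ≤ k) (hf : f ∈ A)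
    (hz : z ∉ f.1) (hmax : ∀ g ∈ A, level z g ≤ level z f) :
    IsSelfAvoiding k (A.erase f ∪ walls z f) where
  card_eq g hg := (Finset.mem_union.1 hg).elim
    (fun hg ↦ hA.card_eq g (Finset.mem_of_mem_erase hg))
    (fun hg ↦ (card_of_mem_walls hz hg).trans (hA.card_eq f hf))
  connected := hA.connectedFaces_replace_walls hk hf hz hmax
  card_incident_le := hA.card_incident_replace_walls_le hf hz hmax

end SelfAvoiding

section Ports

variable {d k r s : ℕ} {z i j : Fin d} {h h' : ℤ} {E E' E'' : Face d}
  {R : Finset (Fin d)} {X X' X'' U : Finset (Face d)}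

/-- The set `U` arises from `X` by adding faces of level at least `h`. -/
structure ExtendsAbove (z : Fin d) (h : ℤ) (X U : Finset (Face d)) : Prop where
  subset : X ⊆ U
  le_level : ∀ f ∈ U, f ∉ X → h ≤ level z f

theorem ExtendsAbove.trans (hX : ExtendsAbove z h X X') (hX' : ExtendsAbove z h' X' U)
    (hh : h ≤ h') : ExtendsAbove z h X U where
  subset := hX.subset.trans hX'.subset
  le_level f hf hfX := by
    by_cases hfX' : f ∈ X'
    · exact hX.le_level f hfX' hfX
    · exact hh.trans (hX'.le_level f hf hfX')

theorem extendsAbove_insert {f : Face d} (hf : h ≤ level z f) :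
    ExtendsAbove z h X (insert f X) where
  subset := Finset.subset_insert _ _
  le_level _ hg hgX := (Finset.mem_insert.1 hg).resolve_right hgX ▸ hf

/-- A flat edge `E` at the top of the self-avoiding manifold `X` that bounds only one of its faces,
so that a further face can be attached along `E`. -/
structure IsPort (k : ℕ) (z : Fin d) (X : Finset (Face d)) (E : Face d) : Prop where
  selfAvoiding : IsSelfAvoiding k X
  level_le : ∀ f ∈ X, level z f ≤ level z E
  card_add_one : E.1.card + 1 = k
  flat : z ∉ E.1
  card_incident : (incident X E).card = 1

/-- A port of `X` that is the only edge of `X` at the level of the port. -/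
structure IsIsolatedPort (k : ℕ) (z : Fin d) (X : Finset (Face d)) (E : Face d) : Prop
    extends IsPort k z X E where
  level_lt : ∀ f ∈ X, level z f < level z E
  eq_of_level_eq : ∀ f ∈ X, ∀ e ∈ faceEdges f, level z e = level z E → e = E

/-- `X'` with port `E'` arises from `X` with port `E` by adding `r` faces above `E`. -/
structure Grows (z : Fin d) (r : ℕ) (X : Finset (Face d)) (E : Face d) (X' : Finset (Face d))
    (E' : Face d) : Prop where
  extendsAbove : ExtendsAbove z (level z E) X X'
  level_le : level z E ≤ level z E'
  card_eq : X'.card = X.card + r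

theorem Grows.trans (hX : Grows z r X E X' E') (hX' : Grows z s X' E' X'' E'') :
    Grows z (r + s) X E X'' E'' where
  extendsAbove := hX.extendsAbove.trans hX'.extendsAbove hX.level_le
  level_le := hX.level_le.trans hX'.level_le
  card_eq := by rw [hX'.card_eq, hX.card_eq, add_assoc]

theorem IsPort.insert_thicken (hE : IsPort k z X E) :
    IsIsolatedPort k z (insert (thicken z E) X) (raise z E) := by
  have hflat : z ∉ (raise z E).1 := hE.flat
  have hg := level_thicken_self hE.flat
  have htop := level_raise z E
  have hlt : ∀ f ∈ insert (thicken z E) X, level z f < level z (raise z E) := by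
    intro f hf
    rcases Finset.mem_insert.1 hf with rfl | hf
    · omega
    · have := hE.level_le f hf
      omega
  have hle : ∀ f ∈ X, ∀ e ∈ faceEdges f, level z e ≤ level z E :=
    fun f hf e he ↦ level_edge_le he hE.flat (hE.level_le f hf)
  refine ⟨⟨?_, fun f hf ↦ (hlt f hf).le, hE.card_add_one, hflat, ?_⟩, hlt, ?_⟩
  · refine hE.selfAvoiding.insert ((card_thicken hE.flat).trans hE.card_add_one)
      (fun hX ↦ ?_) hE.card_incident (mem_faceEdges_thicken hE.flat) fun f hf e hef heg ↦ ?_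
    · have := hE.level_le _ hX
      omega
    · have := hle f hf e hef
      rcases level_edge_cases (z := z) heg with ⟨hl, -⟩ | ⟨-, hze, heq⟩ | ⟨hl, -⟩
      · omega
      · exact thicken_injOn hze hE.flat heq.symm
      · omega
  · exact card_incident_eq_one_of_level_lt hlt (Finset.mem_insert_self _ _)
      (raise_mem_faceEdges_thicken hE.flat)
  · intro f hf e he hl
    rcases Finset.mem_insert.1 hf with rfl | hf
    · rcases level_edge_cases (z := z) he with ⟨hl', -⟩ | ⟨hl', -⟩ | ⟨-, hze, e', rfl, heq⟩
      · omega
      · omega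
      · rw [thicken_injOn hE.flat (show z ∉ e'.1 from hze) heq]
    · have := hle f hf e he
      omega

theorem IsPort.grows_insert_thicken (hE : IsPort k z X E) :
    Grows z 1 X E (insert (thicken z E) X) (raise z E) where
  extendsAbove := extendsAbove_insert (by rw [level_thicken_self hE.flat]; omega)
  level_le := by rw [level_raise]; omega
  card_eq := Finset.card_insert_of_notMem fun hX ↦ by
    have := hE.level_le _ hX
    rw [level_thicken_self hE.flat] at this
    omega

/-- The edge of `thicken j E` at the base of `E` that spans the direction `j` instead of `i`. -/
def exchange (i j : Fin d) (E : Face d) : Face d := ((insert j E.1).erase i, E.2)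

theorem level_exchange (hE : z ∉ E.1) (hzj : z ≠ j) : level z (exchange i j E) = level z E := by
  simp [level, exchange, hE, hzj]

theorem level_thicken_of_ne (hzj : z ≠ j) : level z (thicken j E) = level z E := by
  simp [level, thicken, hzj]

theorem IsIsolatedPort.insert_thicken_of_ne (hE : IsIsolatedPort k z X E) (hi : i ∈ E.1)
    (hj : j ∉ E.1) (hzj : z ≠ j) : IsPort k z (insert (thicken j E) X) (exchange i j E) := by
  have hg : level z (thicken j E) = level z E := level_thicken_of_ne hzj
  have hlexchange : level z (exchange i j E) = level z E := level_exchange hE.flat hzj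
  have hzg : z ∉ (thicken j E).1 := by simp [thicken, hE.flat, hzj]
  have hexchange : exchange i j E ∈ faceEdges (thicken j E) :=
    erase_mem_faceEdges (f := thicken j E) (Finset.mem_insert_of_mem hi)
  have hcard : (thicken j E).1.card = k := (card_thicken hj).trans hE.card_add_one
  have hne : exchange i j E ≠ E := by
    intro h
    have hi' : i ∉ (exchange i j E).1 := Finset.notMem_erase _ _
    rw [h] at hi'
    exact hi' hi
  refine ⟨?_, ?_, ?_, ?_, ?_⟩
  · refine hE.selfAvoiding.insert hcard (fun hX ↦ (hE.level_lt _ hX).ne hg) hE.card_incident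
      (mem_faceEdges_thicken hj) fun f hf e hef heg ↦ ?_
    exact hE.eq_of_level_eq f hf e hef ((level_edge_of_notMem heg hzg).trans hg)
  · intro f hf
    rcases Finset.mem_insert.1 hf with rfl | hf
    · exact (hg.trans hlexchange.symm).le
    · exact (hE.level_le f hf).trans hlexchange.ge
  · exact (Finset.card_erase_add_one (Finset.mem_insert_of_mem hi)).trans hcard
  · simp [exchange, hE.flat, hzj]
  · refine Finset.card_eq_one.2 ⟨thicken j E, Finset.eq_singleton_iff_unique_mem.2
      ⟨mem_incident.2 ⟨Finset.mem_insert_self _ _, hexchange⟩, fun f hf ↦ ?_⟩⟩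
    obtain ⟨hf, hef⟩ := mem_incident.1 hf
    exact (Finset.mem_insert.1 hf).resolve_right
      fun hf ↦ hne (hE.eq_of_level_eq f hf _ hef hlexchange)

theorem IsIsolatedPort.grows_insert_thicken_of_ne (hE : IsIsolatedPort k z X E) (hzj : z ≠ j) :
    Grows z 1 X E (insert (thicken j E) X) (exchange i j E) where
  extendsAbove := extendsAbove_insert (level_thicken_of_ne hzj).ge
  level_le := (level_exchange hE.flat hzj).ge
  card_eq := Finset.card_insert_of_notMem
    fun hX ↦ (hE.level_lt _ hX).ne (level_thicken_of_ne hzj)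

theorem card_exchange_sdiff (hi : i ∈ E.1 \ R) (hj : j ∈ R) :
    ((exchange i j E).1 \ R).card + 1 = (E.1 \ R).card := by
  rw [exchange, Finset.erase_sdiff_comm, Finset.insert_sdiff_of_mem _ hj,
    Finset.card_erase_add_one hi]

theorem IsPort.exists_grow_orientation (hE : IsPort k z X E) (hR : R.card + 1 = k) (hzR : z ∉ R) :
    ∃ X' E', IsIsolatedPort k z X' E' ∧ E'.1 = R ∧
      Grows z (2 * (E.1 \ R).card + 1) X E X' E' := by
  have hcard : R.card = E.1.card := by have := hE.card_add_one; omega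
  induction hm : (E.1 \ R).card generalizing X E with
  | zero =>
    have hER : E.1 = R := Finset.eq_of_subset_of_card_le
      (Finset.sdiff_eq_empty_iff_subset.1 (Finset.card_eq_zero.1 hm)) hcard.le
    exact ⟨_, raise z E, hE.insert_thicken, hER, hE.grows_insert_thicken⟩
  | succ m ih =>
    obtain ⟨i, hi⟩ := Finset.card_pos.1 (hm ▸ m.succ_pos : 0 < (E.1 \ R).card)
    obtain ⟨j, hj⟩ : (R \ E.1).Nonempty := by
      rw [← Finset.card_pos, Finset.card_sdiff_comm hcard]
      omega
    obtain ⟨hjR, hjE⟩ := Finset.mem_sdiff.1 hj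
    have hzj : z ≠ j := (ne_of_mem_of_not_mem hjR hzR).symm
    have hE₁ := hE.insert_thicken
    have hE₂ := hE₁.insert_thicken_of_ne (Finset.mem_sdiff.1 hi).1 hjE hzj
    have hm' := card_exchange_sdiff (E := raise z E) hi hjR
    have hraise : ((raise z E).1 \ R).card = m + 1 := hm
    obtain ⟨X', E', hE', hE'R, hgrow⟩ := ih hE₂ (by have := hE₂.card_add_one; omega) (by omega)
    have := hE.grows_insert_thicken.trans ((hE₁.grows_insert_thicken_of_ne hzj).trans hgrow)
    refine ⟨X', E', hE', hE'R, ?_⟩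
    convert this using 1
    ring

theorem IsIsolatedPort.exists_grow (hE : IsIsolatedPort k z X E) (r : ℕ) :
    ∃ X' E', IsIsolatedPort k z X' E' ∧ E'.1 = E.1 ∧ Grows z r X E X' E' := by
  induction r with
  | zero => exact ⟨X, E, hE, rfl, ⟨subset_rfl, fun f hf hf' ↦ absurd hf hf'⟩, le_rfl, rfl⟩
  | succ r ih =>
    obtain ⟨X', E', hE', hEE', hgrow⟩ := ih
    exact ⟨_, raise z E', hE'.insert_thicken, hEE', hgrow.trans hE'.grows_insert_thicken⟩

theorem IsPort.exists_grow (hE : IsPort k z X E) (hR : R.card + 1 = k) (hzR : z ∉ R)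
    (hr : 2 * k ≤ r + 1) :
    ∃ X' E', IsIsolatedPort k z X' E' ∧ E'.1 = R ∧ Grows z r X E X' E' := by
  obtain ⟨X₁, E₁, hE₁, hE₁R, hgrow₁⟩ := hE.exists_grow_orientation hR hzR
  obtain ⟨X₂, E₂, hE₂, hE₂R, hgrow₂⟩ := hE₁.exists_grow (r - (2 * (E.1 \ R).card + 1))
  have hsdiff := Finset.card_le_card (Finset.sdiff_subset (s := E.1) (t := R))
  have hcard := hE.card_add_one
  refine ⟨X₂, E₂, hE₂, hE₂R.trans hE₁R, ?_⟩
  have := hgrow₁.trans hgrow₂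
  rwa [Nat.add_sub_cancel' (by omega)] at this

end Ports

section Decoding

variable {d : ℕ} {z : Fin d} {h l : ℤ} {f : Face d} {A A' B U U' : Finset (Face d)}

/-- The faces of `U` of level at most `h`. -/
def below (z : Fin d) (U : Finset (Face d)) (h : ℤ) : Finset (Face d) := {g ∈ U | level z g ≤ h}

theorem below_mono (U : Finset (Face d)) : Monotone (below z U) :=
  fun _ _ hl ↦ Finset.monotone_filter_right _ fun _ _ hg ↦ le_trans hg hl

theorem below_image_translateFace (t : Fin d → ℤ) (U : Finset (Face d)) (h : ℤ) :
    below z (U.image (translateFace t)) (h + 2 * t z) = (below z U h).image (translateFace t) := by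
  simp [below, Finset.filter_image, level_translateFace]

/-- The bottom part of `U` is `A` with its flat face `f`, at the top of `A`, replaced by the walls
over its edges. -/
structure IsOpenedAt (z : Fin d) (U A : Finset (Face d)) (f : Face d) : Prop where
  mem : f ∈ A
  flat : z ∉ f.1
  two_le_card : 2 ≤ f.1.card
  erase_eq : A.erase f = below z U (level z f)
  walls_eq : walls z f = {g ∈ U | level z g = level z f + 1}

/-- The two ways in which `A` can be seen in a set `U` that was built on top of it. -/
def IsBottom (z : Fin d) (U A : Finset (Face d)) : Prop :=
  (∃ h, A = below z U h) ∨ ∃ f, IsOpenedAt z U A f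

namespace IsOpenedAt

variable {f' : Face d}

theorem card_below_add_one (hA : IsOpenedAt z U A f) :
    (below z U (level z f)).card + 1 = A.card := by
  rw [← hA.erase_eq, Finset.card_erase_add_one hA.mem]

theorem card_lt_card_below (hA : IsOpenedAt z U A f) (hl : level z f < l) :
    A.card < (below z U l).card := by
  have hdisj : Disjoint (below z U (level z f)) (walls z f) := by
    rw [hA.walls_eq]
    exact Finset.disjoint_filter.2 fun g _ hg hg' ↦ by omega
  have hsub : below z U (level z f) ∪ walls z f ⊆ below z U l := by
    rw [hA.walls_eq]
    exact Finset.union_subset (below_mono U hl.le)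
      (Finset.monotone_filter_right _ fun g _ hg ↦ hg.trans_le hl)
  calc A.card
      = (below z U (level z f)).card + 1 := hA.card_below_add_one.symm
    _ < (below z U (level z f)).card + (walls z f).card := by
        have := hA.two_le_card
        rw [card_walls hA.flat]
        omega
    _ = (below z U (level z f) ∪ walls z f).card := (Finset.card_union_of_disjoint hdisj).symm
    _ ≤ (below z U l).card := Finset.card_le_card hsub

theorem card_below_ne (hA : IsOpenedAt z U A f) (l : ℤ) : (below z U l).card ≠ A.card := by
  rcases le_or_gt l (level z f) with hl | hl
  · have := Finset.card_le_card (below_mono (z := z) U hl)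
    have := hA.card_below_add_one
    omega
  · exact (hA.card_lt_card_below hl).ne'

theorem level_le (hA : IsOpenedAt z U A f) (hA' : IsOpenedAt z U A' f')
    (hcard : A.card = A'.card) : level z f' ≤ level z f := by
  by_contra! hlt
  have := hA.card_lt_card_below hlt
  have := hA'.card_below_add_one
  omega

theorem unique (hA : IsOpenedAt z U A f) (hA' : IsOpenedAt z U A' f')
    (hcard : A.card = A'.card) : A = A' := by
  have hl : level z f = level z f' := (hA'.level_le hA hcard.symm).antisymm (hA.level_le hA' hcard)
  have hf : f = f' := walls_injOn ⟨hA.flat, hA.two_le_card⟩ ⟨hA'.flat, hA'.two_le_card⟩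
    (by rw [hA.walls_eq, hA'.walls_eq, hl])
  rw [← Finset.insert_erase hA.mem, ← Finset.insert_erase hA'.mem, hA.erase_eq, hA'.erase_eq, hl,
    hf]

theorem image_translateFace (hA : IsOpenedAt z U A f) (t : Fin d → ℤ) :
    IsOpenedAt z (U.image (translateFace t)) (A.image (translateFace t)) (translateFace t f) where
  mem := Finset.mem_image_of_mem _ hA.mem
  flat := hA.flat
  two_le_card := hA.two_le_card
  erase_eq := by
    rw [level_translateFace, below_image_translateFace, ← hA.erase_eq,
      Finset.image_erase (isSymmetry_translateFace t).injective]
  walls_eq := by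
    rw [walls_translateFace, hA.walls_eq, Finset.filter_image]
    simp [level_translateFace, add_right_comm]

end IsOpenedAt

theorem IsBottom.unique (hA : IsBottom z U A) (hB : IsBottom z U B) (hcard : A.card = B.card) :
    A = B := by
  rcases hA with ⟨h, rfl⟩ | ⟨f, hA⟩ <;> rcases hB with ⟨l, rfl⟩ | ⟨g, hB⟩
  · rcases le_total h l with hl | hl
    · exact Finset.eq_of_subset_of_card_le (below_mono U hl) hcard.ge
    · exact (Finset.eq_of_subset_of_card_le (below_mono U hl) hcard.le).symm
  · exact absurd hcard (hB.card_below_ne h)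
  · exact absurd hcard.symm (hA.card_below_ne l)
  · exact hA.unique hB hcard

theorem IsBottom.image_translateFace (hA : IsBottom z U A) (t : Fin d → ℤ) :
    IsBottom z (U.image (translateFace t)) (A.image (translateFace t)) := by
  rcases hA with ⟨h, rfl⟩ | ⟨f, hA⟩
  · exact .inl ⟨h + 2 * t z, (below_image_translateFace t U h).symm⟩
  · exact .inr ⟨_, hA.image_translateFace t⟩

theorem IsBottom.transEquiv (hA : IsBottom z U A) (hA' : IsBottom z U' A') (hU : TransEquiv U U')
    (hcard : A.card = A'.card) : TransEquiv A A' := by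
  obtain ⟨t, rfl⟩ := hU
  refine ⟨t, (hA.image_translateFace t).unique hA' ?_⟩
  rw [Finset.card_image_of_injective _ (isSymmetry_translateFace t).injective, hcard]

end Decoding

section Stacking

variable {d k : ℕ} {z : Fin d} {e f E F : Face d} {A B X Y U : Finset (Face d)}

/-- A self-avoiding manifold `X` with a port `E`, built from `A` by adding few faces, such that `A`
remains visible at the bottom of everything that is built on top of `X`. -/
structure IsOpening (k : ℕ) (z : Fin d) (A X : Finset (Face d)) (E : Face d) : Prop
    extends IsPort k z X E where
  card_le : X.card + 1 ≤ A.card + 2 * k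
  isBottom : ∀ U, ExtendsAbove z (level z E) X U → IsBottom z U A

theorem IsSelfAvoiding.isOpening_of_thicken_mem (hA : IsSelfAvoiding k A) (he : z ∉ e.1)
    (heA : thicken z e ∈ A) (hmax : ∀ g ∈ A, level z g ≤ level z (thicken z e)) :
    IsOpening k z A A (raise z e) := by
  have hl := level_thicken_self he
  have htop := level_raise z e
  have hcard : e.1.card + 1 = k := (card_thicken he).symm.trans (hA.card_eq _ heA)
  have hlt : ∀ g ∈ A, level z g < level z (raise z e) := fun g hg ↦ by
    have := hmax g hg
    omega
  refine ⟨⟨hA, fun g hg ↦ (hlt g hg).le, hcard, he, ?_⟩, by omega,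
    fun U hU ↦ .inl ⟨level z (thicken z e), ?_⟩⟩
  · exact card_incident_eq_one_of_level_lt hlt heA (raise_mem_faceEdges_thicken he)
  · ext g
    simp only [below, Finset.mem_filter]
    refine ⟨fun hg ↦ ⟨hU.subset hg, hmax g hg⟩, fun ⟨hg, _⟩ ↦ ?_⟩
    by_contra hgA
    have := hU.le_level g hg hgA
    omega

theorem isOpenedAt_of_extendsAbove (hf : f ∈ A) (hz : z ∉ f.1) (hcard : 2 ≤ f.1.card)
    (hmax : ∀ g ∈ A, level z g ≤ level z f)
    (hU : ExtendsAbove z (level z f + 2) (A.erase f ∪ walls z f) U) : IsOpenedAt z U A f where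
  mem := hf
  flat := hz
  two_le_card := hcard
  erase_eq := by
    ext g
    simp only [below, Finset.mem_filter]
    refine ⟨fun hg ↦ ⟨hU.subset (Finset.mem_union_left _ hg),
      hmax g (Finset.mem_of_mem_erase hg)⟩, fun ⟨hg, _⟩ ↦ ?_⟩
    by_contra hgA
    have := hU.le_level g hg fun hgX ↦ by
      have := level_of_mem_walls hz ((Finset.mem_union.1 hgX).resolve_left hgA)
      omega
    omega
  walls_eq := by
    ext g
    rw [Finset.mem_filter]
    refine ⟨fun hg ↦ ⟨hU.subset (Finset.mem_union_right _ hg), level_of_mem_walls hz hg⟩,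
      fun ⟨hg, _⟩ ↦ ?_⟩
    by_contra hgW
    have := hU.le_level g hg fun hgX ↦ by
      have := hmax g (Finset.mem_of_mem_erase ((Finset.mem_union.1 hgX).resolve_right hgW))
      omega
    omega

theorem IsSelfAvoiding.isOpening_replace_walls (hA : IsSelfAvoiding k A) (hk : 2 ≤ k) (hf : f ∈ A)
    (hz : z ∉ f.1) (hmax : ∀ g ∈ A, level z g ≤ level z f) (he : e ∈ faceEdges f) :
    IsOpening k z A (A.erase f ∪ walls z f) (raise z e) := by
  have hze := notMem_of_mem_faceEdges he hz
  have hw : thicken z e ∈ walls z f := Finset.mem_image_of_mem _ he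
  have htop : level z (raise z e) = level z f + 2 := by
    rw [level_raise, level_edge_of_notMem he hz]
  have hlt : ∀ g ∈ A.erase f ∪ walls z f, level z g < level z (raise z e) := fun g hg ↦ by
    rcases Finset.mem_union.1 hg with hg | hg
    · have := hmax g (Finset.mem_of_mem_erase hg)
      omega
    · have := level_of_mem_walls hz hg
      omega
  refine ⟨⟨hA.replace_walls hk hf hz hmax, fun g hg ↦ (hlt g hg).le, ?_, hze, ?_⟩, ?_,
    fun U hU ↦ .inr ⟨f, isOpenedAt_of_extendsAbove hf hz (hA.card_eq f hf ▸ hk) hmax (htop ▸ hU)⟩⟩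
  · exact (card_thicken hze).symm.trans ((card_of_mem_walls hz hw).trans (hA.card_eq f hf))
  · exact card_incident_eq_one_of_level_lt hlt (Finset.mem_union_right _ hw)
      (raise_mem_faceEdges_thicken hze)
  · calc (A.erase f ∪ walls z f).card + 1
        ≤ (A.erase f).card + (walls z f).card + 1 := by gcongr; exact Finset.card_union_le _ _
      _ = A.card + 2 * k := by
        rw [card_walls hz, hA.card_eq f hf, add_right_comm, Finset.card_erase_add_one hf]

theorem IsSelfAvoiding.exists_isOpening (hA : IsSelfAvoiding k A) (hk : 2 ≤ k) (hne : A.Nonempty)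
    (z : Fin d) : ∃ X E, IsOpening k z A X E := by
  obtain ⟨f, hf, hmax⟩ := A.exists_max_image (level z) hne
  by_cases hz : z ∈ f.1
  · have hfe : thicken z (f.1.erase z, f.2) = f := Prod.ext (Finset.insert_erase hz) rfl
    exact ⟨A, _, hA.isOpening_of_thicken_mem (Finset.notMem_erase z f.1)
      (by rwa [hfe]) (by rwa [hfe])⟩
  · obtain ⟨e, he⟩ : (faceEdges f).Nonempty := by
      rw [← Finset.card_pos, card_faceEdges, hA.card_eq f hf]
      omega
    exact ⟨_, _, hA.isOpening_replace_walls hk hf hz hmax he⟩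

theorem IsIsolatedPort.union (hE : IsIsolatedPort k z X E) (hY : IsSelfAvoiding k Y)
    (hYE : (incident Y E).card = 1) (hle : ∀ g ∈ Y, level z E ≤ level z g) :
    IsSelfAvoiding k (X ∪ Y) := by
  refine hE.selfAvoiding.union hY ?_ hE.card_incident hYE fun f hf g hg e hef heg ↦ ?_
  · exact Finset.disjoint_left.2 fun f hf hf' ↦ (hE.level_lt f hf).not_ge (hle f hf')
  · exact hE.eq_of_level_eq f hf e hef ((level_edge_le hef hE.flat (hE.level_le f hf)).antisymm
      (le_level_edge heg hE.flat (hle g hg)))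

theorem extendsAbove_union (hXY : ∀ g ∈ Y, level z E ≤ level z g) :
    ExtendsAbove z (level z E) X (X ∪ Y) where
  subset := Finset.subset_union_left
  le_level g hg hgX := hXY g ((Finset.mem_union.1 hg).resolve_left hgX)

theorem extendsAbove_image_image_union_image_image {t : Fin d → ℤ}
    (hE : translateFace t (reflect z F) = E) (hX : ∀ f ∈ X, level z f ≤ level z E) :
    ExtendsAbove z (level z F) Y
      (((X ∪ (Y.image (reflect z)).image (translateFace t)).image (translateFace (-t))).image
        (reflect z)) := by
  rw [Finset.image_union, image_translateFace_image_translateFace, add_neg_cancel,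
    image_translateFace_zero, Finset.image_union, image_reflect_reflect, Finset.union_comm]
  refine extendsAbove_union ?_
  rw [Finset.forall_mem_image, Finset.forall_mem_image]
  intro f hf
  have := hX f hf
  rw [← hE] at this
  simp only [level_reflect, level_translateFace, Pi.neg_apply] at this ⊢
  omega

theorem IsIsolatedPort.exists_union_reflect (hE : IsIsolatedPort k z X E) (hF : IsPort k z Y F)
    (hFE : E.1 = F.1) :
    ∃ U V, IsSelfAvoiding k U ∧ U.card = X.card + Y.card ∧ TransEquiv (U.image (reflect z)) V ∧
      ExtendsAbove z (level z E) X U ∧ ExtendsAbove z (level z F) Y V := by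
  obtain ⟨t, ht⟩ : ∃ t, translateFace t (reflect z F) = E :=
    ⟨E.2 - (reflect z F).2, Prod.ext hFE.symm (add_sub_cancel _ _)⟩
  have hrefl := isSymmetry_reflect z
  have htrans := isSymmetry_translateFace t
  set Y' := (Y.image (reflect z)).image (translateFace t) with hY'
  have hle : ∀ g ∈ Y', level z E ≤ level z g := by
    rw [hY', Finset.forall_mem_image, Finset.forall_mem_image]
    intro g hg
    have := hF.level_le g hg
    rw [← ht]
    simp only [level_reflect, level_translateFace]
    omega
  have hYE : (incident Y' E).card = 1 := by
    rw [hY', ← ht, card_incident_image htrans, card_incident_image hrefl, hF.card_incident]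
  have hdisj : Disjoint X Y' :=
    Finset.disjoint_left.2 fun f hf hf' ↦ (hE.level_lt f hf).not_ge (hle f hf')
  refine ⟨X ∪ Y', _, hE.union ((hF.selfAvoiding.image hrefl).image htrans) hYE hle, ?_,
    transEquiv_image_reflect z ⟨-t, rfl⟩, extendsAbove_union hle,
    extendsAbove_image_image_union_image_image ht hE.level_le⟩
  rw [Finset.card_union_of_disjoint hdisj, hY', Finset.card_image_of_injective _ htrans.injective,
    Finset.card_image_of_injective _ hrefl.injective]

theorem exists_isSelfAvoiding_isBottom (hA : IsSelfAvoiding k A) (hB : IsSelfAvoiding k B)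
    (hk : 2 ≤ k) (hAne : A.Nonempty) (hBne : B.Nonempty) (z : Fin d) {r : ℕ}
    (hr : 6 * k ≤ r + 3) :
    ∃ U V, IsSelfAvoiding k U ∧ U.card = A.card + B.card + r ∧ IsBottom z U A ∧
      TransEquiv (U.image (reflect z)) V ∧ IsBottom z V B := by
  obtain ⟨X, E, hX⟩ := hA.exists_isOpening hk hAne z
  obtain ⟨Y, F, hY⟩ := hB.exists_isOpening hk hBne z
  have hXA := hX.card_le
  have hYB := hY.card_le
  obtain ⟨X', E', hX', hEF, hgrow⟩ := hX.exists_grow (r := A.card + B.card + r - X.card - Y.card)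
    hY.card_add_one hY.flat (by omega)
  obtain ⟨U, V, hU, hcard, hV, hXU, hYV⟩ := hX'.exists_union_reflect hY.toIsPort hEF
  refine ⟨U, V, hU, ?_, hX.isBottom U (hgrow.extendsAbove.trans hXU hgrow.level_le), hV,
    hY.isBottom V hYV⟩
  have := hgrow.card_eq
  omega

end Stacking

section Counting

variable {d k n : ℕ} {f g : Face d} {M : Finset (Face d)}

theorem ConnectedFaces.exists_mem_apply_eq (hM : ConnectedFaces M) (hf : f ∈ M) (hg : g ∈ M)
    {i : Fin d} {c : ℤ} (hfc : f.2 i ≤ c) (hcg : c ≤ g.2 i) : ∃ x ∈ M, x.2 i = c := by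
  induction hM f hf g hg using Relation.ReflTransGen.head_induction_on with
  | refl => exact ⟨g, hg, hfc.antisymm hcg⟩
  | @head a b hab _ ih =>
    rcases hfc.eq_or_lt with heq | hlt
    · exact ⟨a, hab.1, heq⟩
    · obtain ⟨-, hb, -, e, hea, heb⟩ := hab
      have hba : b.2 i ≤ a.2 i + 1 := (le_of_mem_faceEdges heb i).trans
        (le_add_one_of_mem_faceEdges hea i)
      exact ih hb (by omega)

theorem ConnectedFaces.apply_le_add_card (hM : ConnectedFaces M) (hf : f ∈ M) (hg : g ∈ M)
    (i : Fin d) : g.2 i ≤ f.2 i + M.card := by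
  have hsub : Finset.Icc (f.2 i) (g.2 i) ⊆ M.image fun x ↦ x.2 i := by
    intro c hc
    obtain ⟨hfc, hcg⟩ := Finset.mem_Icc.1 hc
    exact Finset.mem_image.2 (hM.exists_mem_apply_eq hf hg hfc hcg)
  have hcard := (Finset.card_le_card hsub).trans Finset.card_image_le
  rw [Int.card_Icc] at hcard
  omega

/-- The faces whose base vertex has coordinates of absolute value at most `n`. -/
noncomputable def box (d n : ℕ) : Finset (Face d) :=
  Finset.univ ×ˢ Fintype.piFinset fun _ ↦ Finset.Icc (-(n : ℤ)) n

theorem ConnectedFaces.exists_image_translateFace_subset_box (hM : ConnectedFaces M) :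
    ∃ t, M.image (translateFace t) ⊆ box d M.card := by
  obtain rfl | ⟨f, hf⟩ := M.eq_empty_or_nonempty
  · exact ⟨0, by simp⟩
  refine ⟨-f.2, Finset.image_subset_iff.2 fun g hg ↦ ?_⟩
  refine Finset.mem_product.2
    ⟨Finset.mem_univ _, Fintype.mem_piFinset.2 fun i ↦ Finset.mem_Icc.2 ?_⟩
  have := hM.apply_le_add_card hg hf i
  have := hM.apply_le_add_card hf hg i
  simp only [translateFace, Pi.add_apply, Pi.neg_apply]
  omega

/-- The relation whose classes `samCount d k n` counts. -/
abbrev SamRel (d k n : ℕ) (A B : {M : Finset (Face d) // IsSAM d k n M}) : Prop :=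
  TransEquiv A.val B.val

theorem equivalence_samRel (d k n : ℕ) : Equivalence (SamRel d k n) :=
  transEquiv_equivalence.comap Subtype.val

instance finite_quot_samRel (d k n : ℕ) : Finite (Quot (SamRel d k n)) := by
  let S := {M : {M : Finset (Face d) // IsSAM d k n M} // M.val ⊆ box d n}
  have : Finite S := Finite.of_injective
    (fun M : S ↦ (⟨M.1.1, Finset.mem_powerset.2 M.2⟩ : (box d n).powerset))
    fun M N h ↦ Subtype.ext (Subtype.ext (Subtype.mk.inj h))
  refine Finite.of_surjective (fun M : S ↦ Quot.mk (SamRel d k n) M.1) ?_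
  rintro ⟨M, hM⟩
  obtain ⟨hcard, hM'⟩ := isSAM_iff.1 hM
  obtain ⟨t, ht⟩ := hM'.connected.exists_image_translateFace_subset_box
  have hcard' : (M.image (translateFace t)).card = n := by
    rw [Finset.card_image_of_injective _ (isSymmetry_translateFace t).injective, hcard]
  refine ⟨⟨⟨M.image (translateFace t),
    isSAM_iff.2 ⟨hcard', hM'.image (isSymmetry_translateFace t)⟩⟩, hcard ▸ ht⟩, ?_⟩
  exact (Quot.sound ⟨t, rfl⟩).symm

theorem card_quot_mul_card_quot_le {α β γ : Type*} {rα : α → α → Prop} {rβ : β → β → Prop}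
    {rγ : γ → γ → Prop} (hγ : Equivalence rγ) [Finite (Quot rγ)] (F : α → β → γ)
    (hF : ∀ a a' b b', rγ (F a b) (F a' b') → rα a a' ∧ rβ b b') :
    Nat.card (Quot rα) * Nat.card (Quot rβ) ≤ Nat.card (Quot rγ) := by
  rw [← Nat.card_prod]
  refine Nat.card_le_card_of_injective
    (fun p : Quot rα × Quot rβ ↦ Quot.mk rγ (F p.1.out p.2.out)) fun p q h ↦ ?_
  obtain ⟨hα, hβ⟩ := hF _ _ _ _ ((hγ.quot_mk_eq_iff _ _).1 h)
  rw [Prod.ext_iff, ← p.1.out_eq, ← q.1.out_eq, ← p.2.out_eq, ← q.2.out_eq]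
  exact ⟨Quot.sound hα, Quot.sound hβ⟩

theorem samCount_eq_zero (hdk : d < k) (hn : n ≠ 0) : samCount d k n = 0 := by
  have : IsEmpty {M : Finset (Face d) // IsSAM d k n M} := by
    refine ⟨fun ⟨M, hM⟩ ↦ ?_⟩
    obtain ⟨f, hf⟩ := Finset.card_ne_zero.1 (hM.1 ▸ hn : M.card ≠ 0)
    have hle := card_finset_fin_le f.1
    rw [hM.2.1 f hf] at hle
    omega
  exact Nat.card_of_isEmpty

end Counting

theorem samCount_pseudo_superadditive_general (d k : ℕ) (hk : 1 < k) (n m : ℕ) (hn : 1 ≤ n)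
    (hm : 1 ≤ m) {r : ℕ} (hr : 6 * k ≤ r + 3) :
    samCount d k n * samCount d k m ≤ samCount d k (n + m + r) := by
  rcases lt_or_ge d k with hdk | hkd
  · simp [samCount_eq_zero hdk (by omega : n ≠ 0)]
  let z : Fin d := ⟨0, by omega⟩
  have hstack : ∀ (A : {M : Finset (Face d) // IsSAM d k n M})
      (B : {M : Finset (Face d) // IsSAM d k m M}),
      ∃ U : {M : Finset (Face d) // IsSAM d k (n + m + r) M}, IsBottom z U A ∧
        ∃ V, TransEquiv (U.val.image (reflect z)) V ∧ IsBottom z V B := by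
    rintro ⟨A, hA⟩ ⟨B, hB⟩
    obtain ⟨rfl, hA'⟩ := isSAM_iff.1 hA
    obtain ⟨rfl, hB'⟩ := isSAM_iff.1 hB
    obtain ⟨U, V, hU, hcard, hUA, hUV, hVB⟩ := exists_isSelfAvoiding_isBottom hA' hB' hk
      (Finset.card_pos.1 hn) (Finset.card_pos.1 hm) z hr
    exact ⟨⟨U, isSAM_iff.2 ⟨hcard, hU⟩⟩, hUA, V, hUV, hVB⟩
  choose U hUA V hUV hVB using hstack
  refine card_quot_mul_card_quot_le (equivalence_samRel d k (n + m + r)) U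
    fun A A' B B' hU ↦ ⟨?_, ?_⟩
  · exact (hUA A B).transEquiv (hUA A' B') hU (A.2.1.trans A'.2.1.symm)
  · refine (hVB A B).transEquiv (hVB A' B') ?_ (B.2.1.trans B'.2.1.symm)
    exact transEquiv_equivalence.trans (transEquiv_equivalence.symm (hUV A B))
      (transEquiv_equivalence.trans (transEquiv_image_reflect z hU) (hUV A' B'))

theorem samCount_pseudo_superadditive (d k : ℕ) (hk : 1 < k) (hkd : k < d)
    (n m : ℕ) (hn : 1 ≤ n) (hm : 1 ≤ m) :
    samCount d k n * samCount d k m ≤ samCount d k (n + m + 2 * (k ^ 2 + 3 * k - 1)) :=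
  samCount_pseudo_superadditive_general d k hk n m hn hm (by omega)
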